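/- arXiv:1409.4890 — 3 statements merged into one kernel-verified Lean document; each statement's English description precedes it below -/
import Mathlib

section
/- Let r, ξ, α_D, α_I be real numbers with r − ξ > 0, α_D > 0 and α_I > 0, let A₁ be the 3×3 real matrix whose rows are (0, 0, α_I), (0, −α_D, 0), (0, 0, −α_I), and let m : [0, ∞) → ℝ³ be differentiable with m′(s) = A₁·m(s) for all s ≥ 0 and m(0) = (d₀, d₁, i). Then the function s ↦ e^{−(r−ξ)s}·(m₁(s) + m₂(s)) is integrable on [0, ∞) and ∫₀^∞ e^{−(r−ξ)s}(m₁(s) + m₂(s)) ds = (1/(r−ξ))·d₀ + (1/(r−ξ+α_D))·d₁ + (1/(r−ξ) − 1/(r−ξ+α_I))·i. -/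
open MeasureTheory Matrix

theorem const_of_deriv_zero_aux (f : ℝ → ℝ) (h : ∀ s, 0 ≤ s → HasDerivAt f 0 s) :
    ∀ s, 0 ≤ s → f s = f 0 := by
  intro s hs
  exact constant_of_has_deriv_right_zero (a := 0) (b := s)
    (fun x hx => (h x hx.1).continuousAt.continuousWithinAt)
    (fun x hx => (h x hx.1).hasDerivWithinAt) s ⟨hs, le_rfl⟩

theorem exp_of_deriv_aux (f : ℝ → ℝ) (a : ℝ) (h : ∀ s, 0 ≤ s → HasDerivAt f (-a * f s) s) :
    ∀ s, 0 ≤ s → f s = f 0 * Real.exp (-a * s) := by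
  intro s hs
  have key := const_of_deriv_zero_aux (fun s => f s * Real.exp (a * s)) (by
    intro t ht
    have h2 : HasDerivAt (fun s => Real.exp (a * s)) (Real.exp (a * t) * (a * 1)) t :=
      ((hasDerivAt_id t).const_mul a).exp
    have h3 : HasDerivAt (fun s => f s * Real.exp (a * s)) _ t := (h t ht).mul h2
    exact h3.congr_deriv (by ring)) s hs
  simp only [mul_zero, Real.exp_zero, mul_one] at key
  rw [← key, mul_assoc, ← Real.exp_add]
  simp

/-- Deterministic core of Proposition 1: if `m(s)` is the conditional mean of the
Ornstein–Uhlenbeck state vector `(D₀, D₁, I)`, solving `m′ = A₁ m` on `[0, ∞)` with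
`m(0) = (d₀, d₁, i)`, then the discounted integral of expected future dividends
`∫₀^∞ e^{−(r−ξ)s}(m₁(s) + m₂(s)) ds` exists and gives the efficient price coefficients. -/
theorem discounted_dividend_integral_of_ou_mean (r ξ αD αI d₀ d₁ i : ℝ)
    (hr : r - ξ > 0) (hαD : αD > 0) (hαI : αI > 0)
    (m : ℝ → Fin 3 → ℝ)
    (hderiv : ∀ s : ℝ, 0 ≤ s →
      HasDerivAt m
        ((!![0, 0, αI; 0, -αD, 0; 0, 0, -αI] : Matrix (Fin 3) (Fin 3) ℝ).mulVec (m s)) s)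
    (h0 : m 0 = ![d₀, d₁, i]) :
    IntegrableOn (fun s => Real.exp (-(r - ξ) * s) * (m s 0 + m s 1)) (Set.Ici 0)
    ∧ ∫ s in Set.Ici (0 : ℝ), Real.exp (-(r - ξ) * s) * (m s 0 + m s 1)
      = (1 / (r - ξ)) * d₀ + (1 / (r - ξ + αD)) * d₁
        + (1 / (r - ξ) - 1 / (r - ξ + αI)) * i := by
  have hc := fun s hs => hasDerivAt_pi.1 (hderiv s hs)
  have e1 := exp_of_deriv_aux (fun s => m s 1) αD (fun s hs => by
    simpa [Matrix.mulVec, dotProduct, Fin.sum_univ_three] using hc s hs 1)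
  have e2 := exp_of_deriv_aux (fun s => m s 2) αI (fun s hs => by
    simpa [Matrix.mulVec, dotProduct, Fin.sum_univ_three] using hc s hs 2)
  have e0 := const_of_deriv_zero_aux (fun s => m s 0 + m s 2) (fun s hs => by
    have h3 : HasDerivAt (fun s => m s 0 + m s 2) _ s := (hc s hs 0).add (hc s hs 2)
    exact h3.congr_deriv (by simp [Matrix.mulVec, dotProduct, Fin.sum_univ_three]))
  simp only [h0] at e0 e1 e2
  simp at e0 e1 e2
  have heq : Set.EqOn (fun s => Real.exp (-(r - ξ) * s) * (m s 0 + m s 1))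
      (fun s => (d₀ + i) * Real.exp (-(r - ξ) * s) - i * Real.exp (-(r - ξ + αI) * s)
        + d₁ * Real.exp (-(r - ξ + αD) * s)) (Set.Ici 0) := by
    intro s hs
    have hs' : 0 ≤ s := hs
    have a0 : m s 0 = d₀ + i - m s 2 := by linarith [e0 s hs']
    have x1 : Real.exp (-(r - ξ + αI) * s) = Real.exp (-(r - ξ) * s) * Real.exp (-(αI * s)) := by
      rw [← Real.exp_add]; congr 1; ring
    have x2 : Real.exp (-(r - ξ + αD) * s) = Real.exp (-(r - ξ) * s) * Real.exp (-(αD * s)) := by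
      rw [← Real.exp_add]; congr 1; ring
    simp only [x1, x2]
    rw [a0, e2 s hs', e1 s hs']
    ring
  have hI : ∀ c a : ℝ, 0 < a →
      IntegrableOn (fun s => c * Real.exp (-a * s)) (Set.Ici 0) := fun c a ha => by
    rw [integrableOn_Ici_iff_integrableOn_Ioi]
    exact (integrableOn_exp_mul_Ioi (neg_lt_zero.2 ha) 0).const_mul c
  have hV : ∀ c a : ℝ, 0 < a →
      ∫ s in Set.Ici (0 : ℝ), c * Real.exp (-a * s) = c * (1 / a) := fun c a ha => by
    rw [integral_Ici_eq_integral_Ioi, integral_const_mul,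
      integral_exp_mul_Ioi (neg_lt_zero.2 ha) 0]
    simp
  have p1 : 0 < r - ξ + αI := by linarith
  have p2 : 0 < r - ξ + αD := by linarith
  have i0 := hI (d₀ + i) _ hr
  have i1 := hI i _ p1
  have i2 := hI d₁ _ p2
  have i01 : IntegrableOn (fun s => (d₀ + i) * Real.exp (-(r - ξ) * s)
      - i * Real.exp (-(r - ξ + αI) * s)) (Set.Ici 0) := i0.sub i1
  refine ⟨((i0.sub i1).add i2).congr_fun heq.symm measurableSet_Ici, ?_⟩
  rw [setIntegral_congr_fun measurableSet_Ici heq, integral_add i01 i2,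
    integral_sub i0 i1, hV _ _ hr, hV _ _ p1, hV _ _ p2]
  ring
end

section
/- Let B½ be a real 5×4 matrix, T½ a real 1×4 row vector, S a real 1×5 row vector, A a real 5×5 matrix, L a real 5×5 matrix, and r a real number. Set B := B½(B½)ᵀ and let the scalar T := T½(T½)ᵀ be nonzero. Define U := B½·(T·I₄ − (T½)ᵀT½)·(B½)ᵀ, X := B½(T½)ᵀS + T·(A − ½r·I₅), and Y := SᵀS. If L satisfies the algebraic Riccati equation L·U·L − L·X − Xᵀ·L − Y = 0, then L·B·L − (1/T)·(L·B½·(T½)ᵀ + Sᵀ)·(T½·(B½)ᵀ·L + S) − Aᵀ·L − L·A + r·L = 0. -/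
open Matrix

/-- Algebraic heart of Theorem 1: if `L` solves the algebraic Riccati equation
`L U L − L X − Xᵀ L − Y = 0`, with `B := B½ B½ᵀ`, scalar `T := T½ T½ᵀ ≠ 0`,
`U := B½(T·I₄ − T½ᵀT½)B½ᵀ`, `X := B½T½ᵀS + T(A − ½r I₅)` and `Y := SᵀS`, then the quadratic
part of the Hamilton–Jacobi–Bellman equation vanishes:
`L B L − (1/T)(L B½ T½ᵀ + Sᵀ)(T½ B½ᵀ L + S) − AᵀL − LA + rL = 0`. -/
theorem riccati_implies_bellman_quadratic_vanishes
    (Bh : Matrix (Fin 5) (Fin 4) ℝ) (Th : Matrix (Fin 1) (Fin 4) ℝ)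
    (S : Matrix (Fin 1) (Fin 5) ℝ) (A L : Matrix (Fin 5) (Fin 5) ℝ) (r : ℝ)
    (T : ℝ) (hT : T = (Th * Thᵀ) 0 0) (hT0 : T ≠ 0)
    (B : Matrix (Fin 5) (Fin 5) ℝ) (hB : B = Bh * Bhᵀ)
    (U : Matrix (Fin 5) (Fin 5) ℝ)
    (hU : U = Bh * (T • (1 : Matrix (Fin 4) (Fin 4) ℝ) - Thᵀ * Th) * Bhᵀ)
    (X : Matrix (Fin 5) (Fin 5) ℝ)
    (hX : X = Bh * Thᵀ * S + T • (A - (r / 2) • (1 : Matrix (Fin 5) (Fin 5) ℝ)))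
    (Y : Matrix (Fin 5) (Fin 5) ℝ) (hY : Y = Sᵀ * S)
    (hRiccati : L * U * L - L * X - Xᵀ * L - Y = 0) :
    L * B * L - (1 / T) • ((L * Bh * Thᵀ + Sᵀ) * (Th * Bhᵀ * L + S)) - Aᵀ * L - L * A + r • L
      = 0 := by
  have key : L * B * L - (1 / T) • ((L * Bh * Thᵀ + Sᵀ) * (Th * Bhᵀ * L + S)) - Aᵀ * L - L * A
      + r • L = (1 / T) • (L * U * L - L * X - Xᵀ * L - Y) := by
    subst hB hU hX hY
    simp only [transpose_add, transpose_sub, transpose_smul, transpose_mul, transpose_one,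
      transpose_transpose, Matrix.mul_add, Matrix.add_mul, Matrix.mul_sub, Matrix.sub_mul,
      Matrix.mul_smul, Matrix.smul_mul, Matrix.mul_one, Matrix.one_mul, Matrix.mul_assoc]
    match_scalars <;> field_simp <;> ring
  rw [key, hRiccati, smul_zero]
end

section
/- Let B½ be a real 5×4 matrix, T½ a real 1×4 row vector, S a real 1×5 row vector, A a real 5×5 matrix; set B := B½(B½)ᵀ and suppose the scalar T := T½(T½)ᵀ satisfies T > 0. Let r > 0, φ > 0 and β be real. Suppose the symmetric 5×5 real matrix L satisfies the algebraic Riccati equation L·U·L − L·X − Xᵀ·L − Y = 0, where U := B½(T·I₄ − (T½)ᵀT½)(B½)ᵀ, X := B½(T½)ᵀS + T(A − ½r·I₅), Y := SᵀS, and that λ ∈ ℝ satisfies r(1 + λ − ln r) − β − ½·tr((B½)ᵀLB½) = 0. Define J(t, Z, W) := −exp(−(βt + rφW + ½ZᵀLZ + λ)) for (t, Z, W) ∈ ℝ × ℝ⁵ × ℝ. Then for every (t, Z, W): ∂_t J + sup_{(ψ,c)∈ℝ²} [ ½·∑_{j,k=1}^{5} B_{jk}·∂²_{Z_j Z_k}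 J + ψ·∑_{j=1}^{5} (T½(B½)ᵀ)_j·∂²_{W Z_j} J + ½·ψ²·T·∂²_{WW} J + ∑_{j=1}^{5} (AZ)_j·∂_{Z_j} J + (rW − c − ψ·S·Z)·∂_W J − e^{−(βt+φc)} ] = 0, and the supremum is attained at ψ̃ = −((T½(B½)ᵀL + S)·Z)/(rφT) and c̃ = (½ZᵀLZ + rφW + λ − ln r)/φ. -/
open Matrix

/-- The conjectured value function `J(t, Z, W) = −exp(−(βt + rφW + ½ZᵀLZ + λ))` of
Theorem 1. -/
noncomputable def valueFn (L : Matrix (Fin 5) (Fin 5) ℝ) (r φ β lam : ℝ)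
    (t : ℝ) (Z : Fin 5 → ℝ) (W : ℝ) : ℝ :=
  -Real.exp (-(β * t + r * φ * W + (1 / 2) * (Z ⬝ᵥ L.mulVec Z) + lam))

/-- The expression inside the supremum of the Hamilton–Jacobi–Bellman equation:
`½∑_{j,k} B_{jk} ∂²_{Z_jZ_k}J + ψ∑_j (T½B½ᵀ)_j ∂²_{WZ_j}J + ½ψ²T ∂²_{WW}J
+ ∑_j (AZ)_j ∂_{Z_j}J + (rW − c − ψSZ) ∂_W J − e^{−(βt+φc)}`,
with all partial derivatives of the value function written via `deriv`. -/
noncomputable def hjbInner (Bh : Matrix (Fin 5) (Fin 4) ℝ) (Th : Matrix (Fin 1) (Fin 4) ℝ)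
    (S : Matrix (Fin 1) (Fin 5) ℝ) (A L : Matrix (Fin 5) (Fin 5) ℝ)
    (r φ β lam T : ℝ) (t : ℝ) (Z : Fin 5 → ℝ) (W : ℝ) (ψ c : ℝ) : ℝ :=
  (1 / 2) * ∑ j : Fin 5, ∑ k : Fin 5, (Bh * Bhᵀ) j k *
      deriv (fun x =>
        deriv (fun y => valueFn L r φ β lam t (Function.update (Function.update Z j x) k y) W)
          (Function.update Z j x k)) (Z j)
  + ψ * ∑ j : Fin 5, (Th * Bhᵀ) 0 j *
      deriv (fun w => deriv (fun x => valueFn L r φ β lam t (Function.update Z j x) w) (Z j)) W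
  + (1 / 2) * ψ ^ 2 * T *
      deriv (fun w => deriv (fun w' => valueFn L r φ β lam t Z w') w) W
  + ∑ j : Fin 5, (A.mulVec Z) j *
      deriv (fun x => valueFn L r φ β lam t (Function.update Z j x) W) (Z j)
  + (r * W - c - ψ * (S.mulVec Z 0)) * deriv (fun w => valueFn L r φ β lam t Z w) W
  - Real.exp (-(β * t + φ * c))

lemma update_eq_add (Z : Fin 5 → ℝ) (k : Fin 5) (y : ℝ) :
    Function.update Z k y = Z + (y - Z k) • Pi.single k (1 : ℝ) := by
  ext i
  by_cases h : i = k
  · subst h; simp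
  · simp [h]

lemma mulVec_update (L : Matrix (Fin 5) (Fin 5) ℝ) (Z : Fin 5 → ℝ) (j k : Fin 5) (y : ℝ) :
    L.mulVec (Function.update Z j y) k = L.mulVec Z k + (y - Z j) * L k j := by
  rw [update_eq_add, Matrix.mulVec_add, Matrix.mulVec_smul]
  simp

lemma quad_update (L : Matrix (Fin 5) (Fin 5) ℝ) (hL : L.IsSymm) (Z : Fin 5 → ℝ)
    (k : Fin 5) (y : ℝ) :
    Function.update Z k y ⬝ᵥ L.mulVec (Function.update Z k y)
      = Z ⬝ᵥ L.mulVec Z + 2 * (y - Z k) * L.mulVec Z k + (y - Z k) ^ 2 * L k k := by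
  have h1 : Z ⬝ᵥ L.mulVec (Pi.single k (1 : ℝ)) = L.mulVec Z k := by
    rw [Matrix.dotProduct_mulVec, ← Matrix.mulVec_transpose, hL.eq]
    simp
  rw [update_eq_add, Matrix.mulVec_add, Matrix.mulVec_smul, dotProduct_add, add_dotProduct,
    add_dotProduct, dotProduct_smul, dotProduct_smul, smul_dotProduct, smul_dotProduct, h1]
  simp
  ring

lemma hasDerivAt_Z (L : Matrix (Fin 5) (Fin 5) ℝ) (hL : L.IsSymm) (r φ β lam t : ℝ)
    (Z : Fin 5 → ℝ) (W : ℝ) (k : Fin 5) :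
    HasDerivAt (fun y => valueFn L r φ β lam t (Function.update Z k y) W)
      (-valueFn L r φ β lam t Z W * L.mulVec Z k) (Z k) := by
  unfold valueFn
  simp only [quad_update L hL]
  have h0 : HasDerivAt (fun y : ℝ => y - Z k) 1 (Z k) := (hasDerivAt_id _).sub_const _
  have h1 : HasDerivAt (fun y : ℝ => -(β * t + r * φ * W + (1 / 2) * (Z ⬝ᵥ L.mulVec Z
      + 2 * (y - Z k) * L.mulVec Z k + (y - Z k) ^ 2 * L k k) + lam))
      (-L.mulVec Z k) (Z k) := by
    have h := ((((((h0.const_mul 2).mul_const (L.mulVec Z k)).const_add (Z ⬝ᵥ L.mulVec Z)).add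
      ((h0.pow 2).mul_const (L k k))).const_mul (1 / 2)).const_add
        (β * t + r * φ * W)).add_const lam |>.neg
    exact h.congr_deriv (by simp)
  exact h1.exp.neg.congr_deriv (by simp)

lemma hasDerivAt_W (L : Matrix (Fin 5) (Fin 5) ℝ) (r φ β lam t : ℝ)
    (Z : Fin 5 → ℝ) (W : ℝ) :
    HasDerivAt (fun w => valueFn L r φ β lam t Z w)
      (-valueFn L r φ β lam t Z W * (r * φ)) W := by
  unfold valueFn
  have h1 := ((((((hasDerivAt_id W).const_mul (r * φ)).const_add (β * t)).add_const
    ((1 / 2) * (Z ⬝ᵥ L.mulVec Z))).add_const lam).neg).exp.neg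
  exact h1.congr_deriv (by simp)

lemma hasDerivAt_t (L : Matrix (Fin 5) (Fin 5) ℝ) (r φ β lam t : ℝ)
    (Z : Fin 5 → ℝ) (W : ℝ) :
    HasDerivAt (fun t' => valueFn L r φ β lam t' Z W)
      (-valueFn L r φ β lam t Z W * β) t := by
  unfold valueFn
  have h1 := ((((((hasDerivAt_id t).const_mul β).add_const (r * φ * W)).add_const
    ((1 / 2) * (Z ⬝ᵥ L.mulVec Z))).add_const lam).neg).exp.neg
  exact h1.congr_deriv (by simp)

lemma deriv_ZZ (L : Matrix (Fin 5) (Fin 5) ℝ) (hL : L.IsSymm) (r φ β lam t : ℝ)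
    (Z : Fin 5 → ℝ) (W : ℝ) (j k : Fin 5) :
    deriv (fun x =>
        deriv (fun y => valueFn L r φ β lam t (Function.update (Function.update Z j x) k y) W)
          (Function.update Z j x k)) (Z j)
      = -valueFn L r φ β lam t Z W * (L k j - L.mulVec Z j * L.mulVec Z k) := by
  have h : (fun x =>
        deriv (fun y => valueFn L r φ β lam t (Function.update (Function.update Z j x) k y) W)
          (Function.update Z j x k))
      = fun x => -valueFn L r φ β lam t (Function.update Z j x) W
          * (L.mulVec Z k + (x - Z j) * L k j) := by
    funext x
    rw [(hasDerivAt_Z L hL r φ β lam t (Function.update Z j x) W k).deriv, mulVec_update]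
  rw [h]
  have h0 : HasDerivAt (fun x : ℝ => L.mulVec Z k + (x - Z j) * L k j) (1 * L k j) (Z j) :=
    (((hasDerivAt_id _).sub_const _).mul_const _).const_add _
  have h2 := ((hasDerivAt_Z L hL r φ β lam t Z W j).fun_neg.fun_mul h0).deriv
  rw [h2]
  simp only [Function.update_eq_self]
  ring

lemma hjbInner_eq (Bh : Matrix (Fin 5) (Fin 4) ℝ) (Th : Matrix (Fin 1) (Fin 4) ℝ)
    (S : Matrix (Fin 1) (Fin 5) ℝ) (A L : Matrix (Fin 5) (Fin 5) ℝ) (hL : L.IsSymm)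
    (r φ β lam T : ℝ) (t : ℝ) (Z : Fin 5 → ℝ) (W : ℝ) (ψ c : ℝ) :
    hjbInner Bh Th S A L r φ β lam T t Z W ψ c =
      -valueFn L r φ β lam t Z W * ((1 / 2) * (Matrix.trace (Bhᵀ * L * Bh)
          - L.mulVec Z ⬝ᵥ (Bh * Bhᵀ).mulVec (L.mulVec Z))
        - ψ * (r * φ) * ((Th * Bhᵀ * L).mulVec Z 0)
        - (1 / 2) * ψ ^ 2 * T * (r * φ) ^ 2
        + A.mulVec Z ⬝ᵥ L.mulVec Z
        + (r * W - c - ψ * (S.mulVec Z 0)) * (r * φ))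
      - Real.exp (-(β * t + φ * c)) := by
  have hWZ : ∀ j, deriv (fun w => deriv (fun x =>
      valueFn L r φ β lam t (Function.update Z j x) w) (Z j)) W
      = valueFn L r φ β lam t Z W * (r * φ) * L.mulVec Z j := by
    intro j
    have h : (fun w => deriv (fun x =>
        valueFn L r φ β lam t (Function.update Z j x) w) (Z j))
        = fun w => -valueFn L r φ β lam t Z w * L.mulVec Z j := by
      funext w
      exact (hasDerivAt_Z L hL r φ β lam t Z w j).deriv
    rw [h, ((hasDerivAt_W L r φ β lam t Z W).fun_neg.mul_const _).deriv]
    ring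
  have hWW : deriv (fun w => deriv (fun w' => valueFn L r φ β lam t Z w') w) W
      = valueFn L r φ β lam t Z W * (r * φ) ^ 2 := by
    have h : (fun w => deriv (fun w' => valueFn L r φ β lam t Z w') w)
        = fun w => -valueFn L r φ β lam t Z w * (r * φ) := by
      funext w
      exact (hasDerivAt_W L r φ β lam t Z w).deriv
    rw [h, ((hasDerivAt_W L r φ β lam t Z W).fun_neg.mul_const _).deriv]
    ring
  have htr : Matrix.trace (Bhᵀ * L * Bh) = ∑ j, ∑ k, (Bh * Bhᵀ) j k * L k j := by
    rw [Matrix.trace_mul_comm, ← Matrix.mul_assoc]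
    rfl
  have hq : L.mulVec Z ⬝ᵥ (Bh * Bhᵀ).mulVec (L.mulVec Z)
      = ∑ j, ∑ k, (Bh * Bhᵀ) j k * (L.mulVec Z j * L.mulVec Z k) := by
    generalize L.mulVec Z = v
    simp only [dotProduct, Matrix.mulVec, Finset.mul_sum]
    refine Finset.sum_congr rfl fun j _ => Finset.sum_congr rfl fun k _ => ?_
    ring
  have hb : (Th * Bhᵀ * L).mulVec Z 0 = ∑ j, (Th * Bhᵀ) 0 j * L.mulVec Z j := by
    rw [← Matrix.mulVec_mulVec]
    rfl
  have hA : A.mulVec Z ⬝ᵥ L.mulVec Z = ∑ j, A.mulVec Z j * L.mulVec Z j := rfl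
  rw [htr, hq, hb, hA]
  unfold hjbInner
  simp only [deriv_ZZ L hL, hWZ, hWW, (hasDerivAt_W L r φ β lam t Z W).deriv,
    fun j => (hasDerivAt_Z L hL r φ β lam t Z W j).deriv]
  generalize valueFn L r φ β lam t Z W = V
  have e1 : ∑ j, ∑ k, (Bh * Bhᵀ) j k * (-V * (L k j - L.mulVec Z j * L.mulVec Z k))
      = -V * (∑ j, ∑ k, (Bh * Bhᵀ) j k * L k j
        - ∑ j, ∑ k, (Bh * Bhᵀ) j k * (L.mulVec Z j * L.mulVec Z k)) := by
    simp only [← Finset.sum_sub_distrib]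
    rw [Finset.mul_sum]
    refine Finset.sum_congr rfl fun j _ => ?_
    rw [Finset.mul_sum]
    refine Finset.sum_congr rfl fun k _ => ?_
    ring
  have e2 : ∑ j, (Th * Bhᵀ) 0 j * (V * (r * φ) * L.mulVec Z j)
      = V * (r * φ) * ∑ j, (Th * Bhᵀ) 0 j * L.mulVec Z j := by
    rw [Finset.mul_sum]
    refine Finset.sum_congr rfl fun j _ => ?_
    ring
  have e3 : ∑ j, A.mulVec Z j * (-V * L.mulVec Z j)
      = -V * ∑ j, A.mulVec Z j * L.mulVec Z j := by
    rw [Finset.mul_sum]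
    refine Finset.sum_congr rfl fun j _ => ?_
    ring
  rw [e1, e2, e3]
  ring

lemma riccati_quad
    (Bh : Matrix (Fin 5) (Fin 4) ℝ) (Th : Matrix (Fin 1) (Fin 4) ℝ)
    (S : Matrix (Fin 1) (Fin 5) ℝ) (A : Matrix (Fin 5) (Fin 5) ℝ)
    (L : Matrix (Fin 5) (Fin 5) ℝ) (hL : L.IsSymm) (r T : ℝ)
    (hR :
      L * (Bh * (T • (1 : Matrix (Fin 4) (Fin 4) ℝ) - Thᵀ * Th) * Bhᵀ) * L
        - L * (Bh * Thᵀ * S + T • (A - (r / 2) • (1 : Matrix (Fin 5) (Fin 5) ℝ)))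
        - (Bh * Thᵀ * S + T • (A - (r / 2) • (1 : Matrix (Fin 5) (Fin 5) ℝ)))ᵀ * L
        - Sᵀ * S = 0) (Z : Fin 5 → ℝ) :
    T * (L.mulVec Z ⬝ᵥ (Bh * Bhᵀ).mulVec (L.mulVec Z))
      - ((Th * Bhᵀ * L).mulVec Z 0 + S.mulVec Z 0) ^ 2
      - 2 * T * (A.mulVec Z ⬝ᵥ L.mulVec Z) + T * r * (Z ⬝ᵥ L.mulVec Z) = 0 := by
  have hLv : ∀ v : Fin 5 → ℝ, Z ⬝ᵥ L.mulVec v = L.mulVec Z ⬝ᵥ v := by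
    intro v
    rw [Matrix.dotProduct_mulVec, ← Matrix.mulVec_transpose, hL.eq]
  set X := Bh * Thᵀ * S + T • (A - (r / 2) • (1 : Matrix (Fin 5) (Fin 5) ℝ)) with hX
  have htr : ∀ {n m : ℕ} (M : Matrix (Fin n) (Fin m) ℝ) (u : Fin m → ℝ) (v : Fin n → ℝ),
      u ⬝ᵥ Mᵀ.mulVec v = M.mulVec u ⬝ᵥ v := by
    intro n m M u v
    rw [Matrix.dotProduct_mulVec, Matrix.vecMul_transpose]
  have hTg : ∀ v : Fin 5 → ℝ, ∀ u : Fin 1 → ℝ, v ⬝ᵥ (Bh * Thᵀ).mulVec u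
      = (Th * Bhᵀ).mulVec v 0 * u 0 := by
    intro v u
    have : Bh * Thᵀ = (Th * Bhᵀ)ᵀ := by simp
    rw [this, htr]
    simp [dotProduct]
  have h := congrArg (fun M => Z ⬝ᵥ M.mulVec Z) hR
  simp only [Matrix.sub_mulVec, dotProduct_sub, Matrix.zero_mulVec, dotProduct_zero] at h
  have a1 : Z ⬝ᵥ (L * (Bh * (T • (1 : Matrix (Fin 4) (Fin 4) ℝ) - Thᵀ * Th) * Bhᵀ) * L).mulVec Z
      = T * (L.mulVec Z ⬝ᵥ (Bh * Bhᵀ).mulVec (L.mulVec Z))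
        - ((Th * Bhᵀ * L).mulVec Z 0) ^ 2 := by
    have : Bh * (T • (1 : Matrix (Fin 4) (Fin 4) ℝ) - Thᵀ * Th) * Bhᵀ
        = T • (Bh * Bhᵀ) - (Bh * Thᵀ) * (Th * Bhᵀ) := by
      simp [Matrix.mul_sub, Matrix.sub_mul, Matrix.mul_assoc]
    rw [this, ← Matrix.mulVec_mulVec, ← Matrix.mulVec_mulVec, hLv, Matrix.sub_mulVec,
      dotProduct_sub, Matrix.smul_mulVec, dotProduct_smul, smul_eq_mul,
      ← Matrix.mulVec_mulVec _ (Bh * Thᵀ), hTg, ← Matrix.mulVec_mulVec _ (Th * Bhᵀ)]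
    ring
  have aX : L.mulVec Z ⬝ᵥ X.mulVec Z = (Th * Bhᵀ * L).mulVec Z 0 * S.mulVec Z 0
      + T * (A.mulVec Z ⬝ᵥ L.mulVec Z) - T * (r / 2) * (Z ⬝ᵥ L.mulVec Z) := by
    rw [hX, Matrix.add_mulVec, dotProduct_add, ← Matrix.mulVec_mulVec, hTg,
      Matrix.smul_mulVec, Matrix.sub_mulVec, Matrix.smul_mulVec, Matrix.one_mulVec,
      dotProduct_smul, dotProduct_sub, dotProduct_smul, ← Matrix.mulVec_mulVec _ (Th * Bhᵀ),
      dotProduct_comm _ (A.mulVec Z), dotProduct_comm _ Z]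
    simp only [smul_eq_mul]
    ring
  have a2 : Z ⬝ᵥ (L * X).mulVec Z = L.mulVec Z ⬝ᵥ X.mulVec Z := by
    rw [← Matrix.mulVec_mulVec, hLv]
  have a3 : Z ⬝ᵥ (Xᵀ * L).mulVec Z = L.mulVec Z ⬝ᵥ X.mulVec Z := by
    rw [← Matrix.mulVec_mulVec, htr, dotProduct_comm]
  have a4 : Z ⬝ᵥ (Sᵀ * S).mulVec Z = (S.mulVec Z 0) ^ 2 := by
    rw [← Matrix.mulVec_mulVec, htr]
    simp [dotProduct, sq]
  rw [a1, a2, a3, a4, aX] at h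
  linarith

/-- Verification part of Theorem 1: if the symmetric matrix `L` solves the algebraic Riccati
equation and `λ` satisfies `r(1 + λ − ln r) − β − ½tr(B½ᵀLB½) = 0`, then the conjectured
value function solves the stationary Hamilton–Jacobi–Bellman equation, with the supremum
attained at the optimal stock demand `ψ̃ = −(T½B½ᵀL + S)Z/(rφT)` and optimal consumption
`c̃ = (½ZᵀLZ + rφW + λ − ln r)/φ`. -/
theorem valueFn_solves_HJB
    (Bh : Matrix (Fin 5) (Fin 4) ℝ) (Th : Matrix (Fin 1) (Fin 4) ℝ)
    (S : Matrix (Fin 1) (Fin 5) ℝ) (A : Matrix (Fin 5) (Fin 5) ℝ)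
    (L : Matrix (Fin 5) (Fin 5) ℝ) (hLsymm : L.IsSymm)
    (r φ β lam : ℝ) (hr : 0 < r) (hφ : 0 < φ)
    (T : ℝ) (hT : T = (Th * Thᵀ) 0 0) (hTpos : 0 < T)
    (hRiccati :
      L * (Bh * (T • (1 : Matrix (Fin 4) (Fin 4) ℝ) - Thᵀ * Th) * Bhᵀ) * L
        - L * (Bh * Thᵀ * S + T • (A - (r / 2) • (1 : Matrix (Fin 5) (Fin 5) ℝ)))
        - (Bh * Thᵀ * S + T • (A - (r / 2) • (1 : Matrix (Fin 5) (Fin 5) ℝ)))ᵀ * L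
        - Sᵀ * S = 0)
    (hlam : r * (1 + lam - Real.log r) - β - (1 / 2) * Matrix.trace (Bhᵀ * L * Bh) = 0) :
    ∀ (t : ℝ) (Z : Fin 5 → ℝ) (W : ℝ),
      deriv (fun t' => valueFn L r φ β lam t' Z W) t
        + hjbInner Bh Th S A L r φ β lam T t Z W
            (-(((Th * Bhᵀ * L + S).mulVec Z) 0) / (r * φ * T))
            (((1 / 2) * (Z ⬝ᵥ L.mulVec Z) + r * φ * W + lam - Real.log r) / φ) = 0
      ∧ ∀ ψ c : ℝ,
          hjbInner Bh Th S A L r φ β lam T t Z W ψ c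
            ≤ hjbInner Bh Th S A L r φ β lam T t Z W
                (-(((Th * Bhᵀ * L + S).mulVec Z) 0) / (r * φ * T))
                (((1 / 2) * (Z ⬝ᵥ L.mulVec Z) + r * φ * W + lam - Real.log r) / φ) := by
  intro t Z W
  have hV : valueFn L r φ β lam t Z W
      = -Real.exp (-(β * t + r * φ * W + (1 / 2) * (Z ⬝ᵥ L.mulVec Z) + lam)) := rfl
  have hRq := riccati_quad Bh Th S A L hLsymm r T hRiccati Z
  have hsum : (Th * Bhᵀ * L + S).mulVec Z 0 = (Th * Bhᵀ * L).mulVec Z 0 + S.mulVec Z 0 := by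
    rw [Matrix.add_mulVec]
    rfl
  simp only [hjbInner_eq Bh Th S A L hLsymm, (hasDerivAt_t L r φ β lam t Z W).deriv, hsum]
  set E := Real.exp (-(β * t + r * φ * W + (1 / 2) * (Z ⬝ᵥ L.mulVec Z) + lam)) with hE
  have hEpos : 0 < E := Real.exp_pos _
  have hexp : ∀ c : ℝ, Real.exp (-(β * t + φ * c)) = r * E * Real.exp (-(φ *
      (c - ((1 / 2) * (Z ⬝ᵥ L.mulVec Z) + r * φ * W + lam - Real.log r) / φ))) := by
    intro c
    have hrE : r * E = Real.exp (Real.log r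
        + -(β * t + r * φ * W + (1 / 2) * (Z ⬝ᵥ L.mulVec Z) + lam)) := by
      rw [Real.exp_add, Real.exp_log hr]
    rw [hrE, ← Real.exp_add]
    congr 1
    field_simp
    ring
  simp only [hexp, hV, neg_neg, sub_self, mul_zero, neg_zero, Real.exp_zero, mul_one]
  generalize (Th * Bhᵀ * L).mulVec Z 0 = b at *
  generalize S.mulVec Z 0 = s at *
  generalize L.mulVec Z ⬝ᵥ (Bh * Bhᵀ).mulVec (L.mulVec Z) = g at *
  generalize A.mulVec Z ⬝ᵥ L.mulVec Z = a at *
  generalize Z ⬝ᵥ L.mulVec Z = q at *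
  generalize Matrix.trace (Bhᵀ * L * Bh) = tr at *
  clear_value E
  constructor
  · have hβ : β = r * (1 + lam - Real.log r) - (1 / 2) * tr := by linarith
    have ha : a = (T * g - (b + s) ^ 2 + T * r * q) / (2 * T) := by
      field_simp
      linarith
    rw [hβ, ha]
    field_simp
    ring
  · intro ψ c
    set c0 := ((1 / 2) * q + r * φ * W + lam - Real.log r) / φ with hc0
    clear_value c0
    have hx := Real.add_one_le_exp (-(φ * (c - c0)))
    have h1 : 0 ≤ r * E * (Real.exp (-(φ * (c - c0))) - (-(φ * (c - c0)) + 1)) :=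
      mul_nonneg (by positivity) (by linarith)
    have h2 : 0 ≤ E * ((1 / 2) * T * (r * φ) ^ 2 * (ψ - -(b + s) / (r * φ * T)) ^ 2) := by
      positivity
    have h3 : b + s = -(r * φ * T) * (-(b + s) / (r * φ * T)) := by
      field_simp
    set p := -(b + s) / (r * φ * T) with hp
    clear_value p
    have hb : b = -(r * φ * T) * p - s := by linarith
    rw [hb]
    nlinarith [h1, h2]
end
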